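/- Let L = 2m+1 ≥ 3 be an odd integer and let N ≥ 2 be an integer admitting a divisor d ≥ 2 with gcd(d, L) = 1. Then the L-state F-type Grover walk on the cycle with N vertices has infinite period; that is, (U^{F,L}_N)^n ≠ I for every integer n ≥ 1. -/

import Mathlib

open Matrix Polynomial

/-- The M-type Grover coin `A^{M,L}` for `L = 2m+1`: diagonal entries `-(2m-1)/L`,
off-diagonal entries `2/L`. -/
noncomputable def coinM (m : ℕ) : Matrix (Fin (2*m+1)) (Fin (2*m+1)) ℂ :=
  fun i j => if i = j then (1 - 2*(m:ℂ)) / (2*(m:ℂ)+1) else 2 / (2*(m:ℂ)+1)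

/-- The F-type Grover coin `A^{F,L}` for `L = 2m+1`: anti-diagonal entries `-(2m-1)/L`,
all other entries `2/L`. -/
noncomputable def coinF (m : ℕ) : Matrix (Fin (2*m+1)) (Fin (2*m+1)) ℂ :=
  fun i j => if (i : ℕ) + (j : ℕ) = 2*m then (1 - 2*(m:ℂ)) / (2*(m:ℂ)+1)
    else 2 / (2*(m:ℂ)+1)

/-- The time-evolution operator of the `L`-state (`L = 2m+1`) Grover walk with local coin `A`
on the cycle `C_N`: entry at `((v,i),(w,j))` is `A i j` if `v ≡ w + (i - m) (mod N)`,
and `0` otherwise. -/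
noncomputable def walkU (m N : ℕ) (A : Matrix (Fin (2*m+1)) (Fin (2*m+1)) ℂ) :
    Matrix ((ZMod N) × Fin (2*m+1)) ((ZMod N) × Fin (2*m+1)) ℂ :=
  fun p q => if p.1 = q.1 + ((p.2 : ℕ) : ZMod N) - (m : ZMod N) then A p.2 q.2 else 0

/-- `ζ_N = exp(2πi/N)`. -/
noncomputable def zetaN (N : ℕ) : ℂ := Complex.exp (2 * Real.pi * Complex.I / N)

/-- The diagonal matrix `Z = diag(ζ_N^m, ζ_N^{m-1}, …, ζ_N^{-m})`. -/
noncomputable def Zmat (N m : ℕ) : Matrix (Fin (2*m+1)) (Fin (2*m+1)) ℂ :=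
  Matrix.diagonal fun i => zetaN N ^ ((m : ℤ) - ((i : ℕ) : ℤ))

/-- The integer power `Z^k` of the diagonal matrix `Z`, defined for any `k ∈ ℤ`. -/
noncomputable def ZmatPow (N m : ℕ) (k : ℤ) : Matrix (Fin (2*m+1)) (Fin (2*m+1)) ℂ :=
  Matrix.diagonal fun i => zetaN N ^ ((((m : ℤ) - ((i : ℕ) : ℤ))) * k)

/-- `f^{M,L}_{N,k}(x) = det(x·I_L − Z^k A^{M,L})`. -/
noncomputable def fMk (m N : ℕ) (k : ℤ) : Polynomial ℂ :=
  (ZmatPow N m k * coinM m).charpoly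

/-- `f^{M,L}_N(x) = ∏_{k=0}^{N-1} f^{M,L}_{N,k}(x)`. -/
noncomputable def fM (m N : ℕ) : Polynomial ℂ :=
  ∏ k ∈ Finset.range N, fMk m N (k : ℤ)

/-- `f^{F,L}_{N,k}(x) = det(x·I_L − Z^k A^{F,L})`. -/
noncomputable def fFk (m N : ℕ) (k : ℤ) : Polynomial ℂ :=
  (ZmatPow N m k * coinF m).charpoly

/-- `f^{F,L}_N(x) = ∏_{k=0}^{N-1} f^{F,L}_{N,k}(x)`. -/
noncomputable def fF (m N : ℕ) : Polynomial ℂ :=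
  ∏ k ∈ Finset.range N, fFk m N (k : ℤ)

/-!
If `d ∣ N`, the covering `C_N → C_d` intertwines the two walks, so a period of the walk on `C_N` is
also one on `C_d`. If `U ^ n = 1` on `C_d`, the eigenvalues of `U` are roots of unity and `tr U` is
an algebraic integer. Only the coin states `i ≡ m (mod d)` contribute to the trace, which gives
`tr U = d * (c * 2 / L - 1)` with `L = 2 * m + 1` and `c = 2 * ⌊m / d⌋ + 1`. Hence the odd number
`L` divides `d * c`. If `d ≤ m`, then `0 < d * c < 2 * L` forces `d * c = L`; otherwise `c = 1`. So
one of `d` and `L` divides the other.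
-/

section IntegralTrace

theorem isIntegral_of_mem_spectrum {R K A : Type*} [CommRing R] [Field K] [Ring A] [Algebra R K]
    [Algebra K A] [Algebra R A] [IsScalarTower R K A] {a : A} (ha : IsIntegral R a) {x : K}
    (hx : x ∈ spectrum K a) : IsIntegral R x := by
  obtain ⟨p, hp_monic, hpa⟩ := ha
  have : Nontrivial A := by
    by_contra! hA
    simp [spectrum.of_subsingleton] at hx
  have hpx : (p.map (algebraMap R K)).eval x ∈ spectrum K (aeval a (p.map (algebraMap R K))) :=
    spectrum.subset_polynomial_aeval a _ ⟨x, hx, rfl⟩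
  rw [aeval_map_algebraMap, aeval_def, hpa, spectrum.zero_eq, Set.mem_singleton_iff,
    eval_map] at hpx
  exact ⟨p, hp_monic, hpx⟩

theorem isIntegral_matrix_trace {R K ι : Type*} [CommRing R] [Field K] [IsAlgClosed K]
    [Algebra R K] [Fintype ι] [DecidableEq ι] {M : Matrix ι ι K} (hM : IsIntegral R M) :
    IsIntegral R M.trace := by
  rw [trace_eq_sum_roots_charpoly]
  refine IsIntegral.multiset_sum fun x hx => isIntegral_of_mem_spectrum hM ?_
  exact mem_spectrum_of_isRoot_charpoly (isRoot_of_mem_roots hx)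

theorem dvd_of_isIntegral_of_algebraMap_mul_eq {R S : Type*} [CommRing R] [IsDomain R]
    [IsIntegrallyClosed R] [CommRing S] [IsDomain S] [Algebra R S] [Module.IsTorsionFree R S]
    {a b : R} {z : S} (hz : IsIntegral R z) (h : algebraMap R S b * z = algebraMap R S a) :
    b ∣ a := by
  have hinj : Function.Injective (algebraMap R S) := FaithfulSMul.algebraMap_injective R S
  obtain rfl | hb := eq_or_ne b 0
  · rw [map_zero, zero_mul, eq_comm, map_eq_zero_iff _ hinj] at h
    exact h ▸ dvd_rfl
  suffices z ∈ (algebraMap R S).range by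
    obtain ⟨c, rfl⟩ := this
    exact ⟨c, hinj (by rw [← h, map_mul])⟩
  have hdvd : minpoly R z ∣ C b * X + C (-a) :=
    minpoly.isIntegrallyClosed_dvd hz (by simp [h])
  have hlin : (C b * X + C (-a)).natDegree = 1 := natDegree_linear hb
  have hdeg : (minpoly R z).natDegree ≤ 1 :=
    hlin ▸ natDegree_le_of_dvd hdvd (ne_zero_of_natDegree_gt (n := 0) (by omega))
  exact (minpoly.natDegree_eq_one_iff).mp (hdeg.antisymm (minpoly.natDegree_pos hz))

end IntegralTrace

section Lumping

variable {α β R : Type*} [Fintype α] [Fintype β] [DecidableEq α] [DecidableEq β] [Semiring R]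

theorem matrix_mul_pow_eq_pow_mul {E : Matrix β α R} {M : Matrix α α R} {M' : Matrix β β R}
    (h : E * M = M' * E) (n : ℕ) : E * M ^ n = M' ^ n * E := by
  induction n with
  | zero => simp
  | succ n ih => rw [pow_succ, ← Matrix.mul_assoc, ih, Matrix.mul_assoc, h, ← Matrix.mul_assoc,
      ← pow_succ]

theorem pow_eq_one_of_sum_fiber_eq {M : Matrix α α R} {M' : Matrix β β R} {f : α → β}
    (hf : Function.Surjective f) (h : ∀ b a, ∑ a' with b = f a', M a' a = M' b (f a)) {n : ℕ}
    (hM : M ^ n = 1) : M' ^ n = 1 := by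
  let E : Matrix β α R := (1 : Matrix β β R).submatrix id f
  have mul_E (B : Matrix β β R) : B * E = B.submatrix id f := by
    ext b a
    simp [E, mul_apply, one_apply]
  have hE : E * M = M' * E := by
    ext b a
    rw [mul_E]
    simp [← h, E, mul_apply, one_apply, Finset.sum_filter]
  have hlift : (1 : Matrix β β R).submatrix id f = (M' ^ n).submatrix id f := by
    rw [← mul_E, ← mul_E, ← matrix_mul_pow_eq_pow_mul hE, hM, Matrix.one_mul, Matrix.mul_one]
  ext b b'
  obtain ⟨a, rfl⟩ := hf b'
  exact (congr_fun₂ hlift b a).symm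

end Lumping

section Arithmetic

theorem count_modEq_two_mul_add_one (m : ℕ) {d : ℕ} (hd : 0 < d) :
    (2 * m + 1).count (· ≡ m [MOD d]) = 2 * (m / d) + 1 := by
  rw [Nat.count_modEq_card _ hd]
  have hs : m % d < d := Nat.mod_lt m hd
  have hL : 2 * m + 1 = 2 * (m % d) + 1 + d * (2 * (m / d)) := by
    linear_combination 2 * (Nat.mod_add_div m d).symm
  rw [hL, Nat.add_mul_div_left _ _ hd, Nat.add_mul_mod_self_left]
  obtain h | h := lt_or_ge (2 * (m % d) + 1) d
  · rw [Nat.div_eq_of_lt h, Nat.mod_eq_of_lt h, if_pos (by omega)]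
    omega
  · have hdiv : (2 * (m % d) + 1) / d = 1 := by
      rw [Nat.div_eq_sub_div hd h, Nat.div_eq_of_lt (by omega)]
    have hmod : (2 * (m % d) + 1) % d = 2 * (m % d) + 1 - d := by
      rw [Nat.mod_eq_sub_mod h, Nat.mod_eq_of_lt (by omega)]
    rw [hdiv, hmod, if_neg (by omega)]
    omega

theorem dvd_or_dvd_of_dvd_mul_two_mul_div_add_one {m d : ℕ}
    (h : 2 * m + 1 ∣ d * (2 * (m / d) + 1)) : d ∣ 2 * m + 1 ∨ 2 * m + 1 ∣ d := by
  obtain rfl | hd := d.eq_zero_or_pos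
  · exact .inr (dvd_zero _)
  obtain hmd | hdm := lt_or_ge m d
  · exact .inr (by simpa [Nat.div_eq_of_lt hmd] using h)
  obtain ⟨t, ht⟩ := h
  have hle : d * (m / d) ≤ m := Nat.mul_div_le m d
  have ht_pos : 0 < t := pos_of_mul_pos_right (ht ▸ by positivity) (Nat.zero_le (2 * m + 1))
  have ht_lt : t < 2 := by
    refine lt_of_mul_lt_mul_left (a := 2 * m + 1) ?_ (Nat.zero_le _)
    rw [← ht]
    linarith
  obtain rfl : t = 1 := by omega
  exact .inl ⟨_, by rw [ht, mul_one]⟩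

end Arithmetic

section Walk

theorem walkU_pow_eq_one_of_dvd {m N d : ℕ} [NeZero N] [NeZero d] (hd : d ∣ N)
    {A : Matrix (Fin (2 * m + 1)) (Fin (2 * m + 1)) ℂ} {n : ℕ} (h : walkU m N A ^ n = 1) :
    walkU m d A ^ n = 1 := by
  let π : ZMod N →+* ZMod d := ZMod.castHom hd (ZMod d)
  refine pow_eq_one_of_sum_fiber_eq (f := Prod.map π id)
    ((ZMod.castHom_surjective hd).prodMap Function.surjective_id) ?_ h
  rintro ⟨v, i⟩ ⟨w, j⟩
  have hπ : π (w + (i : ℕ) - m) = π w + (i : ℕ) - m := by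
    rw [map_sub, map_add, map_natCast, map_natCast]
  simp only [walkU, Finset.sum_filter, Fintype.sum_prod_type, Prod.map_apply, id_eq, Prod.mk.injEq,
    ite_and, ← hπ]
  rw [Finset.sum_eq_single (w + (i : ℕ) - m) (by simp +contextual) (by simp)]
  simp

/-- The coin states `i` that do not move the walker on `C_N`, the shift `i - m` being `0` there. -/
def lazyStates (m N : ℕ) : Finset (Fin (2 * m + 1)) :=
  {i | ((i : ℕ) : ZMod N) = m}

theorem card_lazyStates (m N : ℕ) [NeZero N] : (lazyStates m N).card = 2 * (m / N) + 1 := by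
  simp only [lazyStates, ZMod.natCast_eq_natCast_iff]
  rw [← count_modEq_two_mul_add_one m (NeZero.pos N), Nat.count_eq_card_filter_range,
    Finset.card_filter, Finset.card_filter,
    Fin.sum_univ_eq_sum_range (fun i => if i ≡ m [MOD N] then 1 else 0)]

theorem trace_walkU (m N : ℕ) [NeZero N] (A : Matrix (Fin (2 * m + 1)) (Fin (2 * m + 1)) ℂ) :
    (walkU m N A).trace = N * ∑ i ∈ lazyStates m N, A i i := by
  have diag_eq (v : ZMod N) (i : Fin (2 * m + 1)) :
      walkU m N A (v, i) (v, i) = if ((i : ℕ) : ZMod N) = m then A i i else 0 := by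
    simp only [walkU, add_sub_assoc, left_eq_add, sub_eq_zero]
  simp [trace, Fintype.sum_prod_type, diag_eq, lazyStates, Finset.sum_filter]

theorem coinF_diag (m : ℕ) (i : Fin (2 * m + 1)) :
    coinF m i i = 2 / (2 * m + 1) - if (i : ℕ) = m then 1 else 0 := by
  have hL : (2 * m + 1 : ℂ) ≠ 0 := by exact_mod_cast (2 * m).succ_ne_zero
  simp only [coinF, ← two_mul, mul_right_inj' two_ne_zero]
  split_ifs
  · field_simp
    ring
  · ring

theorem trace_walkU_coinF (m N : ℕ) [NeZero N] :
    (walkU m N (coinF m)).trace = N * ((2 * (m / N : ℕ) + 1) * (2 / (2 * m + 1)) - 1) := by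
  have sum_center : ∑ i ∈ lazyStates m N, (if (i : ℕ) = m then 1 else 0 : ℂ) = 1 := by
    let c : Fin (2 * m + 1) := ⟨m, by omega⟩
    rw [Finset.sum_eq_single_of_mem c (by simp [c, lazyStates])]
    · simp [c]
    · intro i _ hi
      exact if_neg fun h => hi (Fin.ext h)
  simp only [trace_walkU, coinF_diag, Finset.sum_sub_distrib, sum_center, Finset.sum_const,
    card_lazyStates, nsmul_eq_mul, Nat.cast_add, Nat.cast_mul, Nat.cast_ofNat, Nat.cast_one]

theorem dvd_of_walkU_coinF_pow_eq_one {m N n : ℕ} [NeZero N] (hn : 1 ≤ n)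
    (h : walkU m N (coinF m) ^ n = 1) : 2 * m + 1 ∣ N * (2 * (m / N) + 1) := by
  have hU : IsIntegral ℤ (walkU m N (coinF m)) := .of_pow hn (h ▸ isIntegral_one)
  have hL : (2 * m + 1 : ℂ) ≠ 0 := by exact_mod_cast (2 * m).succ_ne_zero
  have htr : algebraMap ℤ ℂ (2 * m + 1 : ℕ) * ((walkU m N (coinF m)).trace + N)
      = algebraMap ℤ ℂ (2 * (N * (2 * (m / N) + 1)) : ℕ) := by
    rw [trace_walkU_coinF]
    generalize m / N = q
    push_cast [algebraMap_int_eq, eq_intCast]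
    field_simp
    ring
  have hdvd : 2 * m + 1 ∣ 2 * (N * (2 * (m / N) + 1)) :=
    Int.natCast_dvd_natCast.mp <| dvd_of_isIntegral_of_algebraMap_mul_eq
      ((isIntegral_matrix_trace hU).add (isIntegral_natCast N)) htr
  have hcop : Nat.Coprime (2 * m + 1) 2 := by simp
  exact hcop.dvd_of_dvd_mul_left hdvd

end Walk

theorem stmt5_general (m N d : ℕ) [NeZero N] (hd : d ∣ N) (hdL : ¬ d ∣ 2 * m + 1)
    (hLd : ¬ 2 * m + 1 ∣ d) : ∀ n : ℕ, 1 ≤ n → walkU m N (coinF m) ^ n ≠ 1 := by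
  intro n hn h
  have : NeZero d := ⟨ne_zero_of_dvd_ne_zero (NeZero.ne N) hd⟩
  have hdvd := dvd_of_walkU_coinF_pow_eq_one hn (walkU_pow_eq_one_of_dvd hd h)
  exact (dvd_or_dvd_of_dvd_mul_two_mul_div_add_one hdvd).elim hdL hLd

/-- For odd `L = 2m+1 ≥ 3` and `N ≥ 2` admitting a divisor `d ≥ 2` coprime to
`L`, the F-type Grover walk on the cycle with `N` vertices has infinite period. -/
theorem stmt5 (m N d : ℕ) [NeZero N] (hm : 1 ≤ m) (hN : 2 ≤ N)
    (hd : d ∣ N) (hd2 : 2 ≤ d) (hcop : Nat.gcd d (2*m+1) = 1) :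
    ∀ n : ℕ, 1 ≤ n → (walkU m N (coinF m)) ^ n ≠ 1 :=
  stmt5_general m N d hd (fun h => absurd (Nat.Coprime.eq_one_of_dvd hcop h) (by omega))
    fun h => absurd (Nat.Coprime.eq_one_of_dvd (Nat.Coprime.symm hcop) h) (by omega)
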